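/- Let P(X) ∈ (F_q[T])[X] be a non-constant irreducible polynomial of degree n and inseparable degree f. Let ξ ∈ F_q((T^{-1})) and let α be a root of P(X) (in the algebraic closure of F_q((T^{-1}))) for which |ξ − α| is minimal. If n ≥ 2f, then |ξ − α| ≤ |P(ξ)|^{1/f} · H(P)^{n/f² − 2/f}. -/

import Mathlib

/-!
For a separable polynomial `Q` of degree `m ≥ 2` over `F_q[T]` with leading coefficient `a`, the
discriminant is a nonzero element of `F_q[T]`, so it has absolute value at least `1`. Write it as
`± a ^ (2m - 2) ∏ (β - γ)` over ordered pairs of distinct roots. Given a root `b`, the pairs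
involving `b` contribute `|Q'(b) / a| ^ 2` in absolute value, and every other factor is bounded by
`max 1 |β| * max 1 |γ|`. Gauss's lemma bounds `|a| ∏ max 1 |γ|` by the height `H`, and taking
square roots gives `1 ≤ |Q'(b)| H ^ (m - 2)`. If `b` is a root nearest to `η`, then
`|b - γ| ≤ |η - γ|` for every root `γ`, hence `|η - b| |Q'(b)| ≤ |Q(η)|`, and altogether
`|η - b| ≤ |Q(η)| H ^ (m - 2)`.

An irreducible `P` of inseparable degree `f` is `Q(X ^ f)` with `Q` separable. As `x ↦ x ^ f` is
additive, applying the estimate for `Q` at `η ^ f` bounds `|η - β| ^ f`.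
-/

open Polynomial Filter
open scoped ENNReal

noncomputable section

namespace Ooto

variable (Fq : Type) [Field Fq] [Fintype Fq]

/-- `F_q((T⁻¹))`, realized as formal Laurent series in the variable `X = T⁻¹`. -/
abbrev K := LaurentSeries Fq

/-- The element `T = X⁻¹` of `F_q((T⁻¹))`. -/
def TT : K Fq := HahnSeries.single (-1 : ℤ) (1 : Fq)

/-- The natural embedding of `F_q[T]` into `F_q((T⁻¹))`, sending `T` to `T`. -/
def polyToK : Polynomial Fq →+* K Fq := Polynomial.eval₂RingHom HahnSeries.C (TT Fq)

open Classical in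
/-- The absolute value on `F_q((T⁻¹))`: `|0| = 0` and `|ξ| = q^{-N}` where `N` is the order
of `ξ` as a series in `T⁻¹`. -/
def kabs (f : K Fq) : ℝ := if f = 0 then 0 else (Fintype.card Fq : ℝ) ^ (-f.order)

/-- A fixed algebraic closure of `F_q((T⁻¹))`. -/
abbrev L := AlgebraicClosure (K Fq)

def toL : K Fq →+* L Fq := algebraMap (K Fq) (L Fq)

def φ : Polynomial Fq →+* L Fq := (toL Fq).comp (polyToK Fq)

/-- Evaluation of `P ∈ (F_q[T])[X]` at `ξ ∈ F_q((T⁻¹))`. -/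
def evalK (P : Polynomial (Polynomial Fq)) (ξ : K Fq) : K Fq :=
  Polynomial.eval₂ (polyToK Fq) ξ P

/-- Evaluation of `P ∈ (F_q[T])[X]` at a point of the algebraic closure. -/
def evalL (P : Polynomial (Polynomial Fq)) (α : L Fq) : L Fq :=
  Polynomial.eval₂ (φ Fq) α P

/-- Height of a polynomial over `F_q[T]`: the maximum of the absolute values of its
coefficients. -/
def Hpoly (P : Polynomial (Polynomial Fq)) : ℝ := ⨆ i : ℕ, kabs Fq (polyToK Fq (P.coeff i))

/-- `P` is the minimal polynomial of `α`: a non-constant irreducible primitive polynomial in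
`(F_q[T])[X]` whose leading coefficient is monic in `T`, vanishing at `α`. -/
def IsMinPolyOf (P : Polynomial (Polynomial Fq)) (α : L Fq) : Prop :=
  0 < P.natDegree ∧ Irreducible P ∧ P.IsPrimitive ∧ (P.leadingCoeff).Monic ∧ evalL Fq P α = 0

/-- `α` is algebraic over `F_q(T)`. -/
def IsAlgElem (α : L Fq) : Prop := ∃ P, IsMinPolyOf Fq P α

open Classical in
/-- The minimal polynomial of an algebraic element (junk value `0` otherwise). -/
def minPolyPrim (α : L Fq) : Polynomial (Polynomial Fq) :=
  if h : IsAlgElem Fq α then h.choose else 0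

/-- Degree of an algebraic element. -/
def degAlg (α : L Fq) : ℕ := (minPolyPrim Fq α).natDegree

/-- Height of an algebraic element. -/
def heightAlg (α : L Fq) : ℝ := Hpoly Fq (minPolyPrim Fq α)

/-- Inseparable degree of a polynomial `P ∈ (F_q[T])[X]`: the largest power `f = p^j` of the
characteristic such that `P(X) = R(X^f)` for some `R`. -/
def insepDeg (P : Polynomial (Polynomial Fq)) : ℕ :=
  (ringChar Fq) ^ sSup {j : ℕ | ∃ R : Polynomial (Polynomial Fq),
    P = R.comp (Polynomial.X ^ (ringChar Fq) ^ j)}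

/-- Inseparable degree of an algebraic element. -/
def insepAlg (α : L Fq) : ℕ := insepDeg Fq (minPolyPrim Fq α)

/-- `α'` is the Galois conjugate of the quadratic element `α` (equal to `α` itself in the
inseparable case): the minimal polynomial of `α` factors as `A(X - α)(X - α')`. -/
def IsConjOf (α' α : L Fq) : Prop :=
  (minPolyPrim Fq α).natDegree = 2 ∧
  (minPolyPrim Fq α).map (φ Fq) =
    Polynomial.C (φ Fq (minPolyPrim Fq α).leadingCoeff) *
      (Polynomial.X - Polynomial.C α) * (Polynomial.X - Polynomial.C α')

/-- `v` is an absolute value on the algebraic closure of `F_q((T⁻¹))` extending `kabs`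
(such an extension exists and is unique). -/
structure IsAbsExt (v : L Fq → ℝ) : Prop where
  eq_zero_iff : ∀ x, v x = 0 ↔ x = 0
  map_mul : ∀ x y, v (x * y) = v x * v y
  add_le : ∀ x y, v (x + y) ≤ max (v x) (v y)
  nonneg : ∀ x, 0 ≤ v x
  extends_kabs : ∀ f : K Fq, v (toL Fq f) = kabs Fq f

/-- The exponent `w_n(ξ)`: the supremum of the real numbers `w` such that
`0 < |P(ξ)| ≤ H(P)^{-w}` for infinitely many `P ∈ (F_q[T])[X]` of degree at most `n`. -/
def wExp (n : ℕ) (ξ : K Fq) : EReal :=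
  sSup {x : EReal | ∃ w : ℝ, x = (w : EReal) ∧
    {P : Polynomial (Polynomial Fq) | P.natDegree ≤ n ∧ 0 < kabs Fq (evalK Fq P ξ) ∧
      kabs Fq (evalK Fq P ξ) ≤ Hpoly Fq P ^ (-w)}.Infinite}

/-- The exponent `w_n^*(ξ)`: the supremum of the real numbers `w` such that
`0 < |ξ - α| ≤ H(α)^{-w-1}` for infinitely many algebraic `α` of degree at most `n`. -/
def wStarExp (v : L Fq → ℝ) (n : ℕ) (ξ : K Fq) : EReal :=
  sSup {x : EReal | ∃ w : ℝ, x = (w : EReal) ∧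
    {α : L Fq | IsAlgElem Fq α ∧ degAlg Fq α ≤ n ∧ 0 < v (toL Fq ξ - α) ∧
      v (toL Fq ξ - α) ≤ heightAlg Fq α ^ (-w - 1)}.Infinite}

/-- `pSeq a n = p_{n-1}`, the numerators of the convergents of `[a 0; a 1, a 2, …]`
(with `p_{-1} = 1`). -/
def pSeq (a : ℕ → Polynomial Fq) : ℕ → Polynomial Fq
  | 0 => 1
  | 1 => a 0
  | (n+2) => a (n+1) * pSeq a (n+1) + pSeq a n

/-- `qSeq a n = q_{n-1}`, the denominators of the convergents of `[a 0; a 1, a 2, …]`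
(with `q_{-1} = 0`). -/
def qSeq (a : ℕ → Polynomial Fq) : ℕ → Polynomial Fq
  | 0 => 0
  | 1 => 1
  | (n+2) => a (n+1) * qSeq a (n+1) + qSeq a n

/-- `ξ` has continued fraction expansion `[a 0; a 1, a 2, …]`: each partial quotient `a n`
(`n ≥ 1`) has degree at least one and `|ξ - p_n/q_n| = |q_n|⁻¹|q_{n+1}|⁻¹` for all `n ≥ 0`. -/
def IsCFOf (ξ : K Fq) (a : ℕ → Polynomial Fq) : Prop :=
  (∀ n, 1 ≤ n → 1 ≤ (a n).natDegree) ∧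
  ∀ n : ℕ,
    kabs Fq (ξ - polyToK Fq (pSeq Fq a (n+1)) / polyToK Fq (qSeq Fq a (n+1))) =
      (kabs Fq (polyToK Fq (qSeq Fq a (n+1))) * kabs Fq (polyToK Fq (qSeq Fq a (n+2))))⁻¹

/-- The sequence of partial quotients of `[0; b 0, b 1, b 2, …]`. -/
def cfA (b : ℕ → Polynomial Fq) : ℕ → Polynomial Fq := fun n => if n = 0 then 0 else b (n - 1)

/-- `qden b n` is the denominator `q_n` of the `n`-th convergent of `[0; b 0, b 1, …]`. -/
def qden (b : ℕ → Polynomial Fq) (n : ℕ) : Polynomial Fq := qSeq Fq (cfA Fq b) (n + 1)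

/-- `V^w` for a finite word `V` and a real `w ≥ 0`: `⌊w⌋` copies of `V` followed by the prefix
of `V` of length `⌈(w - ⌊w⌋)|V|⌉`. -/
def wordPow {A : Type*} (V : List A) (w : ℝ) : List A :=
  (List.replicate ⌊w⌋₊ V).flatten ++ V.take ⌈(w - ⌊w⌋₊) * V.length⌉₊

/-- The finite word `l` is a prefix of the infinite word `b`. -/
def IsPrefixOfSeq {A : Type*} (l : List A) (b : ℕ → A) : Prop :=
  ∀ (i : ℕ) (h : i < l.length), l.get ⟨i, h⟩ = b i

/-- Condition `(*)_ρ` for an infinite word. -/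
def SatisfiesCond {A : Type*} (b : ℕ → A) (ρ : ℝ) : Prop :=
  ∃ (U V : ℕ → List A) (w : ℕ → ℝ),
    (∀ n, V n ≠ []) ∧ (∀ n, 0 ≤ w n) ∧
    (∀ n, IsPrefixOfSeq (U n ++ wordPow (V n) (w n)) b) ∧
    (∀ n, ρ * (((U n).length + (V n).length : ℕ) : ℝ) ≤
      (((U n).length + (wordPow (V n) (w n)).length : ℕ) : ℝ)) ∧
    StrictMono fun n => (wordPow (V n) (w n)).length

/-- The Diophantine exponent of an infinite word: the supremum of the `ρ` such that the word
satisfies Condition `(*)_ρ`. -/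
def dioExp {A : Type*} (b : ℕ → A) : EReal :=
  sSup {x : EReal | ∃ ρ : ℝ, x = (ρ : EReal) ∧ SatisfiesCond b ρ}

/-- The complexity function: the number of distinct blocks of `n` consecutive letters. -/
def complexity {A : Type*} (b : ℕ → A) (n : ℕ) : ℕ∞ :=
  {w : Fin n → A | ∃ i : ℕ, ∀ k : Fin n, w k = b (i + k)}.encard

/-- The infinite word `b` is ultimately periodic. -/
def UltimatelyPeriodic {A : Type*} (b : ℕ → A) : Prop :=
  ∃ N T : ℕ, 0 < T ∧ ∀ n, N ≤ n → b (n + T) = b n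



section OffDiag

variable {ι M : Type*} [CommMonoid M]

lemma prod_offDiag_eq_prod_prod_erase [DecidableEq ι] (S : Finset ι) (f : ι → ι → M) :
    ∏ p ∈ S.offDiag, f p.1 p.2 = ∏ i ∈ S, ∏ j ∈ S.erase i, f i j :=
  Finset.prod_finset_product _ _ _ fun p => by
    rw [Finset.mem_offDiag, Finset.mem_erase, ne_comm (a := p.1)]
    tauto

lemma prod_offDiag_swap (S : Finset ι) (f : ι → ι → M) :
    ∏ p ∈ S.offDiag, f p.2 p.1 = ∏ p ∈ S.offDiag, f p.1 p.2 :=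
  Finset.prod_equiv (Equiv.prodComm ι ι)
    (fun p => by
      simp only [Finset.mem_offDiag, Equiv.prodComm_apply, Prod.fst_swap, Prod.snd_swap,
        ne_comm (a := p.1)]
      tauto)
    (fun _ _ => rfl)

lemma prod_offDiag_mul (S : Finset ι) (f : ι → M) :
    ∏ p ∈ S.offDiag, (f p.1 * f p.2) = (∏ i ∈ S, f i) ^ (2 * (S.card - 1)) := by
  classical
  have hfst : ∏ p ∈ S.offDiag, f p.1 = (∏ i ∈ S, f i) ^ (S.card - 1) := by
    rw [prod_offDiag_eq_prod_prod_erase S fun i _ => f i, ← Finset.prod_pow]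
    refine Finset.prod_congr rfl fun i hi => ?_
    rw [Finset.prod_const, Finset.card_erase_of_mem hi]
  rw [Finset.prod_mul_distrib, prod_offDiag_swap S fun i _ => f i, hfst, ← pow_add, two_mul]

lemma prod_offDiag_insert [DecidableEq ι] {S : Finset ι} {b : ι} (hb : b ∉ S) {f : ι → ι → M}
    (hf : ∀ i j, f i j = f j i) :
    ∏ p ∈ (insert b S).offDiag, f p.1 p.2 =
      (∏ i ∈ S, f b i) ^ 2 * ∏ p ∈ S.offDiag, f p.1 p.2 := by
  have herase : ∀ i ∈ S, ∏ j ∈ (insert b S).erase i, f i j = f b i * ∏ j ∈ S.erase i, f i j := by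
    intro i hi
    have hbi : b ≠ i := fun h => hb (h ▸ hi)
    rw [Finset.erase_insert_of_ne hbi, Finset.prod_insert (fun h => hb (Finset.mem_of_mem_erase h)),
      hf]
  rw [prod_offDiag_eq_prod_prod_erase, prod_offDiag_eq_prod_prod_erase, Finset.prod_insert hb,
    Finset.erase_insert hb, Finset.prod_congr rfl herase, Finset.prod_mul_distrib, sq, mul_assoc]

end OffDiag

section RootSeparation

variable {B : Type*} [Ring B] {w : AbsoluteValue B ℝ}

lemma injective_of_one_le_abv {A : Type*} [Ring A] {i : A →+* B}
    (hi : ∀ x, x ≠ 0 → 1 ≤ w (i x)) :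
    Function.Injective i := by
  refine (injective_iff_map_eq_zero i).2 fun x hx => by_contra fun hx0 => ?_
  have := hi x hx0
  rw [hx, map_zero] at this
  exact not_lt_of_ge this one_pos

lemma abv_sub_le_max_one_mul_max_one (hna : IsNonarchimedean w) (x y : B) :
    w (x - y) ≤ max 1 (w x) * max 1 (w y) := by
  have hx : 1 ≤ max 1 (w x) := le_max_left _ _
  have hy : 1 ≤ max 1 (w y) := le_max_left _ _
  calc w (x - y) ≤ max (w x) (w y) := by
        simpa only [sub_eq_add_neg, map_neg_eq_map] using hna x (-y)
    _ ≤ max 1 (w x) * max 1 (w y) :=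
        max_le ((le_max_right _ _).trans (le_mul_of_one_le_right (by positivity) hy))
          ((le_max_right _ _).trans (le_mul_of_one_le_left (by positivity) hx))

lemma prod_offDiag_abv_sub_le (hna : IsNonarchimedean w) (S : Finset B) :
    ∏ p ∈ S.offDiag, w (p.1 - p.2) ≤ (∏ x ∈ S, max 1 (w x)) ^ (2 * (S.card - 1)) := by
  rw [← prod_offDiag_mul]
  exact Finset.prod_le_prod (fun _ _ => w.nonneg _)
    fun p _ => abv_sub_le_max_one_mul_max_one hna p.1 p.2

lemma one_le_mul_prod_abv_sub_mul_pow [DecidableEq B] (hna : IsNonarchimedean w) {S : Finset B}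
    (hS : S.Nonempty) {b : B} (hb : b ∉ S) {c : ℝ} (hc : 0 ≤ c)
    (hdisc : 1 ≤ c ^ (2 * S.card) * ∏ p ∈ (insert b S).offDiag, w (p.1 - p.2)) :
    1 ≤ (c * ∏ γ ∈ S, w (b - γ)) * (c * ∏ γ ∈ S, max 1 (w γ)) ^ (S.card - 1) := by
  set D := ∏ γ ∈ S, w (b - γ)
  set N := ∏ γ ∈ S, max 1 (w γ)
  have hD : 0 ≤ D := Finset.prod_nonneg fun _ _ => w.nonneg _
  have hN : 0 ≤ N := Finset.prod_nonneg fun _ _ => by positivity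
  obtain ⟨k, hk⟩ : ∃ k, S.card = k + 1 := Nat.exists_eq_succ_of_ne_zero hS.card_ne_zero
  refine (one_le_sq_iff₀
    (mul_nonneg (mul_nonneg hc hD) (pow_nonneg (mul_nonneg hc hN) _))).1 ?_
  calc 1 ≤ c ^ (2 * S.card) * (D ^ 2 * ∏ p ∈ S.offDiag, w (p.1 - p.2)) := by
        rwa [← prod_offDiag_insert hb fun x y => w.map_sub x y]
    _ ≤ c ^ (2 * S.card) * (D ^ 2 * N ^ (2 * (S.card - 1))) := by
        gcongr
        exact prod_offDiag_abv_sub_le hna S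
    _ = ((c * D) * (c * N) ^ (S.card - 1)) ^ 2 := by
        rw [hk, Nat.add_sub_cancel]
        ring

end RootSeparation

section Discriminant

variable {B : Type*} [CommRing B] [IsDomain B]

lemma prod_erase_roots_eq_prod_toFinset_erase [DecidableEq B] {M : Type*} [CommMonoid M]
    {Q : B[X]} (hnd : Q.roots.Nodup) (b : B) (f : B → M) :
    ((Q.roots.erase b).map f).prod = ∏ γ ∈ Q.roots.toFinset.erase b, f γ := by
  rw [Finset.prod, Finset.erase_val, Multiset.toFinset_val, hnd.dedup]

lemma eval_derivative_of_mem_roots [DecidableEq B] {Q : B[X]} (hs : Q.Splits) {b : B}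
    (hb : b ∈ Q.roots) :
    Q.derivative.eval b = Q.leadingCoeff * ((Q.roots.erase b).map (b - ·)).prod := by
  conv_lhs => rw [hs.eq_prod_roots]
  rw [derivative_C_mul, eval_C_mul, eval_multiset_prod_X_sub_C_derivative hb]

lemma prod_roots_eval_derivative [DecidableEq B] {Q : B[X]} (hs : Q.Splits)
    (hnd : Q.roots.Nodup) :
    (Q.roots.map Q.derivative.eval).prod =
      Q.leadingCoeff ^ Q.natDegree * ∏ p ∈ Q.roots.toFinset.offDiag, (p.1 - p.2) := by
  have hcard : Q.roots.toFinset.card = Q.natDegree := by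
    rw [Multiset.toFinset_card_of_nodup hnd, hs.natDegree_eq_card_roots]
  have hprod : (Q.roots.map Q.derivative.eval).prod =
      ∏ β ∈ Q.roots.toFinset, Q.derivative.eval β := by
    rw [Finset.prod, Multiset.toFinset_val, hnd.dedup]
  rw [hprod, prod_offDiag_eq_prod_prod_erase _ fun x y : B => x - y, ← hcard, ← Finset.prod_const,
    ← Finset.prod_mul_distrib]
  refine Finset.prod_congr rfl fun β hβ => ?_
  rw [eval_derivative_of_mem_roots hs (Multiset.mem_toFinset.1 hβ),
    prod_erase_roots_eq_prod_toFinset_erase hnd]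

lemma discr_eq_prod_offDiag_roots [DecidableEq B] {Q : B[X]} (hdeg : 0 < Q.natDegree)
    (hs : Q.Splits) (hnd : Q.roots.Nodup) :
    Q.discr = (-1) ^ (Q.natDegree * (Q.natDegree - 1) / 2) *
      (Q.leadingCoeff ^ (2 * (Q.natDegree - 1)) *
        ∏ p ∈ Q.roots.toFinset.offDiag, (p.1 - p.2)) := by
  have ha : Q.leadingCoeff ≠ 0 := leadingCoeff_ne_zero.2 (ne_zero_of_natDegree_gt hdeg)
  have hres := resultant_eq_prod_eval Q Q.derivative _ (natDegree_derivative_le Q) hs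
  rw [resultant_deriv (natDegree_pos_iff_degree_pos.1 hdeg), prod_roots_eval_derivative hs hnd]
    at hres
  obtain ⟨k, hk⟩ : ∃ k, Q.natDegree = k + 1 := Nat.exists_eq_succ_of_ne_zero hdeg.ne'
  rw [hk, Nat.add_sub_cancel] at hres ⊢
  set ε : B := (-1) ^ ((k + 1) * k / 2)
  have hε : ε * ε = 1 := by rw [← mul_pow, neg_one_mul, neg_neg, one_pow]
  refine mul_left_cancel₀ ha ?_
  linear_combination ε * hres - Q.leadingCoeff * Q.discr * hε

lemma discr_map_of_injective {A : Type*} [CommRing A] {i : A →+* B} (hi : Function.Injective i)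
    {R : A[X]} (hdeg : 0 < R.natDegree) : (R.map i).discr = i R.discr := by
  have hdeg' : (R.map i).natDegree = R.natDegree := natDegree_map_eq_of_injective hi R
  have ha : (R.map i).leadingCoeff ≠ 0 :=
    leadingCoeff_ne_zero.2 (ne_zero_of_natDegree_gt (hdeg.trans_eq hdeg'.symm))
  have hres := resultant_map_map R R.derivative R.natDegree (R.natDegree - 1) i
  have hmap := resultant_deriv (natDegree_pos_iff_degree_pos.1 (hdeg.trans_eq hdeg'.symm))
  rw [derivative_map, hdeg', hres, resultant_deriv (natDegree_pos_iff_degree_pos.1 hdeg), map_mul,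
    map_mul, ← leadingCoeff_map_of_injective hi, map_pow, map_neg, map_one] at hmap
  exact (mul_left_cancel₀ (mul_ne_zero (pow_ne_zero _ (neg_ne_zero.2 one_ne_zero)) ha) hmap).symm

end Discriminant

section NearestRoot

variable {B : Type*} [CommRing B] [IsDomain B] {w : AbsoluteValue B ℝ}

lemma gaussNorm_X_sub_C_one (x : B) : (X - C x).gaussNorm w 1 = max 1 (w x) := by
  refine le_antisymm ?_ (max_le ?_ ?_)
  · obtain ⟨i, hi⟩ := exists_eq_gaussNorm w 1 (X - C x)
    rw [hi, one_pow, mul_one]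
    rcases i with _ | _ | i
    · simp
    · simp
    · simp [coeff_X]
  · exact (show 1 = w ((X - C x).coeff 1) * 1 ^ 1 by simp).trans_le
      ((X - C x).le_gaussNorm w zero_le_one 1)
  · exact (show w x = w ((X - C x).coeff 0) * 1 ^ 0 by simp).trans_le
      ((X - C x).le_gaussNorm w zero_le_one 0)

lemma gaussNorm_one_eq_prod_roots (hna : IsNonarchimedean w) {Q : B[X]} (hs : Q.Splits) :
    Q.gaussNorm w 1 = w Q.leadingCoeff * (Q.roots.map fun γ => max 1 (w γ)).prod := by
  have := gaussNorm_isAbsoluteValue hna one_pos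
  have hprod : (Q.roots.map (X - C ·)).prod.gaussNorm w 1 =
      (Q.roots.map fun γ => max 1 (w γ)).prod := by
    refine (map_multiset_prod (IsAbsoluteValue.toAbsoluteValue (gaussNorm w 1)) _).trans ?_
    rw [Multiset.map_map]
    exact congrArg _ (Multiset.map_congr rfl fun γ _ => gaussNorm_X_sub_C_one γ)
  conv_lhs => rw [hs.eq_prod_roots]
  rw [gaussNorm_mul hna one_pos, gaussNorm_C, hprod]

lemma abv_sub_mul_eval_derivative_le (hna : IsNonarchimedean w) {Q : B[X]} (hs : Q.Splits)
    {b η : B} (hb : b ∈ Q.roots) (hnear : ∀ γ ∈ Q.roots, w (η - b) ≤ w (η - γ)) :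
    w (η - b) * w (Q.derivative.eval b) ≤ w (Q.eval η) := by
  classical
  have hle : ((Q.roots.erase b).map fun γ => w (b - γ)).prod ≤
      ((Q.roots.erase b).map fun γ => w (η - γ)).prod := by
    refine Multiset.prod_map_le_prod_map₀ _ _ (fun _ _ => w.nonneg _) fun γ hγ => ?_
    calc w (b - γ) = w ((b - η) + (η - γ)) := by rw [sub_add_sub_cancel]
      _ ≤ max (w (b - η)) (w (η - γ)) := hna _ _
      _ = w (η - γ) := by
        rw [w.map_sub, max_eq_right (hnear γ (Multiset.mem_of_mem_erase hγ))]
  rw [eval_derivative_of_mem_roots hs hb, hs.eval_eq_prod_roots, ← Multiset.cons_erase hb,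
    Multiset.map_cons, Multiset.prod_cons, Multiset.erase_cons_head]
  simp only [map_mul, map_multiset_prod, Multiset.map_map, Function.comp_def]
  rw [mul_left_comm]
  gcongr

variable {A : Type*} [CommRing A] {i : A →+* B}

lemma one_le_abv_pow_mul_prod_offDiag_roots [DecidableEq B] (hi : ∀ x, x ≠ 0 → 1 ≤ w (i x))
    {R : A[X]} (hdeg : 0 < R.natDegree) (hs : (R.map i).Splits) (hnd : (R.map i).roots.Nodup) :
    1 ≤ w (R.map i).leadingCoeff ^ (2 * (R.natDegree - 1)) *
      ∏ p ∈ (R.map i).roots.toFinset.offDiag, w (p.1 - p.2) := by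
  have hinj := injective_of_one_le_abv hi
  have hdeg' : (R.map i).natDegree = R.natDegree := natDegree_map_eq_of_injective hinj R
  have hdiscr := discr_eq_prod_offDiag_roots (hdeg.trans_eq hdeg'.symm) hs hnd
  have hdiscr0 : (R.map i).discr ≠ 0 := by
    rw [hdiscr]
    refine mul_ne_zero (pow_ne_zero _ (neg_ne_zero.2 one_ne_zero)) (mul_ne_zero
      (pow_ne_zero _ (leadingCoeff_ne_zero.2 (ne_zero_of_natDegree_gt (hdeg.trans_eq hdeg'.symm))))
      (Finset.prod_ne_zero_iff.2 fun p hp => sub_ne_zero.2 (Finset.mem_offDiag.1 hp).2.2))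
  have habv : w (R.map i).discr = w (R.map i).leadingCoeff ^ (2 * (R.natDegree - 1)) *
      ∏ p ∈ (R.map i).roots.toFinset.offDiag, w (p.1 - p.2) := by
    rw [hdiscr, map_mul, map_pow, map_neg_eq_map, map_one, one_pow, one_mul, map_mul, map_pow,
      map_prod, hdeg']
  rw [← habv]
  rw [discr_map_of_injective hinj hdeg] at hdiscr0 ⊢
  exact hi _ fun h => hdiscr0 (by rw [h, map_zero])

lemma one_le_abv_eval_derivative_mul_gaussNorm_pow (hna : IsNonarchimedean w)
    (hi : ∀ x, x ≠ 0 → 1 ≤ w (i x)) {R : A[X]} (hdeg : 2 ≤ R.natDegree) (hs : (R.map i).Splits)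
    (hnd : (R.map i).roots.Nodup) {b : B} (hb : b ∈ (R.map i).roots) :
    1 ≤ w ((R.map i).derivative.eval b) * (R.map i).gaussNorm w 1 ^ (R.natDegree - 2) := by
  classical
  set Q := R.map i
  set S := Q.roots.toFinset.erase b
  have hQdeg : Q.natDegree = R.natDegree :=
    natDegree_map_eq_of_injective (injective_of_one_le_abv hi) R
  have hinsert : insert b S = Q.roots.toFinset :=
    Finset.insert_erase (Multiset.mem_toFinset.2 hb)
  have hcard : S.card = R.natDegree - 1 := by
    rw [Finset.card_erase_of_mem (Multiset.mem_toFinset.2 hb),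
      Multiset.toFinset_card_of_nodup hnd, ← hs.natDegree_eq_card_roots, hQdeg]
  have hheight : w Q.leadingCoeff * ∏ γ ∈ S, max 1 (w γ) ≤ Q.gaussNorm w 1 := by
    rw [gaussNorm_one_eq_prod_roots hna hs, ← Multiset.cons_erase hb, Multiset.map_cons,
      Multiset.prod_cons, prod_erase_roots_eq_prod_toFinset_erase hnd]
    gcongr
    exact le_mul_of_one_le_left (Finset.prod_nonneg fun _ _ => by positivity) (le_max_left _ _)
  have hderiv : w (Q.derivative.eval b) = w Q.leadingCoeff * ∏ γ ∈ S, w (b - γ) := by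
    rw [eval_derivative_of_mem_roots hs hb, prod_erase_roots_eq_prod_toFinset_erase hnd, map_mul,
      map_prod]
  have hdiscr := one_le_abv_pow_mul_prod_offDiag_roots hi (by lia) hs hnd
  rw [← hcard, ← hinsert] at hdiscr
  have hsep := one_le_mul_prod_abv_sub_mul_pow hna (Finset.card_pos.1 (by lia))
    (Finset.notMem_erase b _) (w.nonneg _) hdiscr
  rw [← hderiv, show S.card - 1 = R.natDegree - 2 by lia] at hsep
  refine hsep.trans ?_
  gcongr

lemma exists_mem_roots_abv_sub_le (hna : IsNonarchimedean w) (hi : ∀ x, x ≠ 0 → 1 ≤ w (i x))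
    {R : A[X]} (hdeg : 2 ≤ R.natDegree) (hs : (R.map i).Splits) (hnd : (R.map i).roots.Nodup)
    (η : B) :
    ∃ b ∈ (R.map i).roots,
      w (η - b) ≤ w ((R.map i).eval η) * (R.map i).gaussNorm w 1 ^ (R.natDegree - 2) := by
  classical
  set Q := R.map i
  have hQdeg : Q.natDegree = R.natDegree :=
    natDegree_map_eq_of_injective (injective_of_one_le_abv hi) R
  have hroots : Q.roots.toFinset.Nonempty := by
    rw [Multiset.toFinset_nonempty, ← Multiset.card_pos, ← hs.natDegree_eq_card_roots]
    lia
  obtain ⟨b, hbS, hmin⟩ := Q.roots.toFinset.exists_min_image (fun γ => w (η - γ)) hroots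
  have hb : b ∈ Q.roots := Multiset.mem_toFinset.1 hbS
  refine ⟨b, hb, ?_⟩
  calc w (η - b)
      ≤ w (η - b) * (w (Q.derivative.eval b) * Q.gaussNorm w 1 ^ (R.natDegree - 2)) :=
        le_mul_of_one_le_right (w.nonneg _)
          (one_le_abv_eval_derivative_mul_gaussNorm_pow hna hi hdeg hs hnd hb)
    _ = w (η - b) * w (Q.derivative.eval b) * Q.gaussNorm w 1 ^ (R.natDegree - 2) :=
        (mul_assoc _ _ _).symm
    _ ≤ w (Q.eval η) * Q.gaussNorm w 1 ^ (R.natDegree - 2) :=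
        mul_le_mul_of_nonneg_right
          (abv_sub_mul_eval_derivative_le hna hs hb fun γ hγ => hmin γ (Multiset.mem_toFinset.2 hγ))
          (pow_nonneg (Q.gaussNorm_nonneg w zero_le_one) _)

end NearestRoot

section Inseparable

lemma gaussNorm_expand_one {B : Type*} [CommRing B] (w : AbsoluteValue B ℝ) {f : ℕ} (hf : 0 < f)
    (Q : B[X]) : (expand B f Q).gaussNorm w 1 = Q.gaussNorm w 1 := by
  apply le_antisymm
  · obtain ⟨i, hi⟩ := exists_eq_gaussNorm w 1 (expand B f Q)
    rw [hi, one_pow, mul_one, coeff_expand hf]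
    split_ifs
    · simpa using Q.le_gaussNorm w zero_le_one (i / f)
    · simpa using Q.gaussNorm_nonneg w zero_le_one
  · obtain ⟨i, hi⟩ := exists_eq_gaussNorm w 1 Q
    rw [hi, one_pow, mul_one, ← coeff_expand_mul hf]
    simpa using (expand B f Q).le_gaussNorm w zero_le_one (i * f)

lemma exists_isRoot_map_expand_abv_sub_pow_le {A F : Type*} [CommRing A] [Field F] [IsAlgClosed F]
    {w : AbsoluteValue F ℝ} (hna : IsNonarchimedean w) {i : A →+* F}
    (hi : ∀ x, x ≠ 0 → 1 ≤ w (i x)) {R : A[X]} (hdeg : 2 ≤ R.natDegree)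
    (hsep : (R.map i).Separable) (p : ℕ) [ExpChar F p] (j : ℕ) (η : F) :
    ∃ β, ((expand A (p ^ j) R).map i).IsRoot β ∧
      w (η - β) ^ p ^ j ≤ w (((expand A (p ^ j) R).map i).eval η) *
        ((expand A (p ^ j) R).map i).gaussNorm w 1 ^ (R.natDegree - 2) := by
  have hf : 0 < p ^ j := pow_pos (expChar_pos F p) j
  obtain ⟨b, hb, hle⟩ := exists_mem_roots_abv_sub_le hna hi hdeg (IsAlgClosed.splits _)
    (nodup_roots hsep) (η ^ p ^ j)
  obtain ⟨β, rfl⟩ := IsAlgClosed.exists_pow_nat_eq b hf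
  rw [map_expand, gaussNorm_expand_one w hf, expand_eval]
  refine ⟨β, ?_, ?_⟩
  · rw [IsRoot.def, expand_eval]
    exact isRoot_of_mem_roots hb
  · rwa [← map_pow, sub_pow_expChar_pow]

lemma separable_map_of_irreducible_of_derivative_ne_zero {A F : Type*} [CommRing A] [IsDomain A]
    [NormalizedGCDMonoid A] [Field F] {i : A →+* F} (hi : Function.Injective i) {R : A[X]}
    (hirr : Irreducible R) (hd : derivative R ≠ 0) : (R.map i).Separable := by
  have hdeg : R.natDegree ≠ 0 := fun h => hd (derivative_of_natDegree_zero h)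
  have hsep : (R.map (algebraMap A (FractionRing A))).Separable := by
    rw [separable_iff_derivative_ne_zero
      ((hirr.isPrimitive hdeg).irreducible_iff_irreducible_map_fraction_map.1 hirr),
      derivative_map]
    exact (Polynomial.map_ne_zero_iff (IsFractionRing.injective A (FractionRing A))).2 hd
  have hcomp : (IsFractionRing.lift hi).comp (algebraMap A (FractionRing A)) = i :=
    RingHom.ext (IsFractionRing.lift_algebraMap hi)
  rw [← hcomp, ← Polynomial.map_map]
  exact hsep.map

lemma bddAbove_setOf_eq_comp_X_pow_pow {A : Type*} [CommRing A] [IsDomain A] {p : ℕ} (hp : 1 < p)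
    {P : A[X]} (hdeg : 0 < P.natDegree) :
    BddAbove {j : ℕ | ∃ R : A[X], P = R.comp (X ^ p ^ j)} := by
  refine ⟨P.natDegree, ?_⟩
  rintro j ⟨R, rfl⟩
  rw [natDegree_comp, natDegree_X_pow] at hdeg ⊢
  exact (Nat.lt_pow_self hp).le.trans
    (Nat.le_mul_of_pos_left _ (Nat.pos_of_mul_pos_right hdeg))

lemma exists_expand_sSup_derivative_ne_zero {A : Type*} [CommRing A] [IsDomain A] {p : ℕ}
    (hp : p.Prime) [CharP A p] {P : A[X]} (hdeg : 0 < P.natDegree) :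
    ∃ R : A[X], expand A (p ^ sSup {j : ℕ | ∃ R : A[X], P = R.comp (X ^ p ^ j)}) R = P ∧
      derivative R ≠ 0 := by
  set s := {j : ℕ | ∃ R : A[X], P = R.comp (X ^ p ^ j)}
  have hbdd : BddAbove s := bddAbove_setOf_eq_comp_X_pow_pow hp.one_lt hdeg
  obtain ⟨R, hR⟩ := Nat.sSup_mem (s := s) ⟨0, P, by rw [pow_zero, pow_one, comp_X]⟩ hbdd
  rw [← expand_eq_comp_X_pow] at hR
  refine ⟨R, hR.symm, fun hd => ?_⟩
  have hmem : sSup s + 1 ∈ s := by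
    refine ⟨contract p R, ?_⟩
    rw [← expand_eq_comp_X_pow, pow_succ, ← expand_expand, expand_contract p hd hp.ne_zero, ← hR]
  exact (Nat.lt_succ_self _).not_ge (le_csSup hbdd hmem)

end Inseparable

lemma le_rpow_inv_mul_rpow_div_of_pow_le {x y H : ℝ} (hx : 0 ≤ x) (hy : 0 ≤ y) (hH : 0 ≤ H)
    {f k : ℕ} (hf : f ≠ 0) (h : x ^ f ≤ y * H ^ k) :
    x ≤ y ^ (f : ℝ)⁻¹ * H ^ ((k : ℝ) / f) :=
  calc x = (x ^ f) ^ (f : ℝ)⁻¹ := (Real.pow_rpow_inv_natCast hx hf).symm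
    _ ≤ (y * H ^ k) ^ (f : ℝ)⁻¹ := by gcongr
    _ = y ^ (f : ℝ)⁻¹ * H ^ ((k : ℝ) / f) := by
        rw [Real.mul_rpow hy (pow_nonneg hH k), ← Real.rpow_natCast H k, ← Real.rpow_mul hH,
          div_eq_mul_inv]

section LaurentSeries

variable {Fq : Type} [Field Fq]

lemma polyToK_monomial (n : ℕ) (a : Fq) :
    polyToK Fq (monomial n a) = HahnSeries.single (-(n : ℤ)) a := by
  simp [polyToK, TT, HahnSeries.single_pow, HahnSeries.C_apply]

lemma coeff_polyToK_neg (g : Fq[X]) (n : ℕ) : (polyToK Fq g).coeff (-(n : ℤ)) = g.coeff n := by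
  induction g using Polynomial.induction_on' with
  | add p q hp hq => rw [map_add, HahnSeries.coeff_add, hp, hq, coeff_add]
  | monomial m a =>
    rw [polyToK_monomial, HahnSeries.coeff_single, coeff_monomial]
    simp [eq_comm]

lemma φ_injective : Function.Injective (φ Fq) := by
  refine (toL Fq).injective.comp ((injective_iff_map_eq_zero _).2 fun g hg => ?_)
  ext n
  rw [← coeff_polyToK_neg, hg, HahnSeries.coeff_zero, coeff_zero]

lemma toL_evalK (P : Fq[X][X]) (ξ : K Fq) : toL Fq (evalK Fq P ξ) = evalL Fq P (toL Fq ξ) :=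
  hom_eval₂ P (polyToK Fq) (toL Fq) ξ

lemma charP_L_ringChar : CharP (L Fq) (ringChar Fq) :=
  charP_of_injective_ringHom (f := (φ Fq).comp C) (RingHom.injective _) (ringChar Fq)

lemma prime_ringChar [Finite Fq] : (ringChar Fq).Prime :=
  CharP.char_is_prime Fq _

lemma insepDeg_pos [Finite Fq] (P : Fq[X][X]) : 0 < insepDeg Fq P :=
  pow_pos prime_ringChar.pos _

lemma exists_expand_insepDeg_separable [Finite Fq] {P : Fq[X][X]}
    (hirr : Irreducible P) (hdeg : 0 < P.natDegree) :
    ∃ (j : ℕ) (R : Fq[X][X]), insepDeg Fq P = ringChar Fq ^ j ∧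
      expand _ (ringChar Fq ^ j) R = P ∧ (R.map (φ Fq)).Separable := by
  obtain ⟨R, hR, hd⟩ := exists_expand_sSup_derivative_ne_zero prime_ringChar hdeg
  let : NormalizedGCDMonoid Fq[X] := Classical.choice inferInstance
  have hRirr : Irreducible R :=
    of_irreducible_expand (pow_pos prime_ringChar.pos _).ne' (by rwa [hR])
  exact ⟨_, R, rfl, hR,
    separable_map_of_irreducible_of_derivative_ne_zero φ_injective hRirr hd⟩

variable [Fintype Fq]

lemma one_le_kabs_polyToK {g : Fq[X]} (hg : g ≠ 0) : 1 ≤ kabs Fq (polyToK Fq g) := by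
  have hcoeff : (polyToK Fq g).coeff (-(g.natDegree : ℤ)) ≠ 0 := by
    rw [coeff_polyToK_neg]
    exact leadingCoeff_ne_zero.2 hg
  have horder : (polyToK Fq g).order ≤ -(g.natDegree : ℤ) :=
    HahnSeries.order_le_of_coeff_ne_zero hcoeff
  rw [kabs, if_neg fun h => hcoeff (by rw [h, HahnSeries.coeff_zero])]
  exact one_le_zpow₀ (mod_cast Fintype.card_pos) (by lia)

lemma kabs_nonneg (x : K Fq) : 0 ≤ kabs Fq x := by
  rw [kabs]
  split_ifs <;> positivity

lemma Hpoly_nonneg (P : Fq[X][X]) : 0 ≤ Hpoly Fq P :=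
  Real.iSup_nonneg fun _ => kabs_nonneg _

variable {v : L Fq → ℝ} (hv : IsAbsExt Fq v)

/-- The extension `v` of `kabs` to the algebraic closure, bundled as an `AbsoluteValue`. -/
def IsAbsExt.toAbsoluteValue : AbsoluteValue (L Fq) ℝ where
  toFun := v
  map_mul' := hv.map_mul
  nonneg' := hv.nonneg
  eq_zero' := hv.eq_zero_iff
  add_le' x y := (hv.add_le x y).trans (max_le_add_of_nonneg (hv.nonneg x) (hv.nonneg y))

include hv in
lemma one_le_abv_φ (g : Fq[X]) (hg : g ≠ 0) : 1 ≤ v (φ Fq g) :=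
  (one_le_kabs_polyToK hg).trans_eq (hv.extends_kabs _).symm

lemma Hpoly_eq_gaussNorm (P : Fq[X][X]) :
    Hpoly Fq P = (P.map (φ Fq)).gaussNorm hv.toAbsoluteValue 1 := by
  have hle : ∀ i, kabs Fq (polyToK Fq (P.coeff i)) ≤
      (P.map (φ Fq)).gaussNorm hv.toAbsoluteValue 1 := fun i => by
    have := (P.map (φ Fq)).le_gaussNorm hv.toAbsoluteValue zero_le_one i
    rw [one_pow, mul_one, coeff_map] at this
    exact (hv.extends_kabs _).symm.trans_le this
  refine le_antisymm (ciSup_le hle) ?_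
  obtain ⟨i, hi⟩ := exists_eq_gaussNorm hv.toAbsoluteValue 1 (P.map (φ Fq))
  rw [hi, one_pow, mul_one, coeff_map]
  exact (hv.extends_kabs _).trans_le
    (le_ciSup (f := fun i => kabs Fq (polyToK Fq (P.coeff i))) ⟨_, Set.forall_mem_range.2 hle⟩ i)

end LaurentSeries

theorem stmt16_general {Fq : Type} [Field Fq] [Fintype Fq] {v : L Fq → ℝ} (hv : IsAbsExt Fq v)
    {P : Fq[X][X]} (hirr : Irreducible P) (hnf : 2 * insepDeg Fq P ≤ P.natDegree) (η : L Fq) :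
    ∃ β, evalL Fq P β = 0 ∧ v (η - β) ≤ v (evalL Fq P η) ^ ((insepDeg Fq P : ℝ)⁻¹) *
      Hpoly Fq P ^ ((P.natDegree : ℝ) / (insepDeg Fq P : ℝ) ^ 2 - 2 / (insepDeg Fq P : ℝ)) := by
  have := Fact.mk (prime_ringChar (Fq := Fq))
  have := charP_L_ringChar (Fq := Fq)
  obtain ⟨j, R, hj, rfl, hsep⟩ := exists_expand_insepDeg_separable hirr
    (by have := insepDeg_pos P; lia)
  rw [hj, natDegree_expand] at hnf ⊢
  have hf : 0 < ringChar Fq ^ j := pow_pos prime_ringChar.pos j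
  have hdeg : 2 ≤ R.natDegree := Nat.le_of_mul_le_mul_right hnf hf
  obtain ⟨β, hβ, hle⟩ := exists_isRoot_map_expand_abv_sub_pow_le (w := hv.toAbsoluteValue)
    hv.add_le (one_le_abv_φ hv) hdeg hsep (ringChar Fq) j η
  rw [← Hpoly_eq_gaussNorm hv, eval_map] at hle
  rw [IsRoot.def, eval_map] at hβ
  have hexp : ((R.natDegree * ringChar Fq ^ j : ℕ) : ℝ) / (ringChar Fq ^ j : ℕ) ^ 2 -
      2 / (ringChar Fq ^ j : ℕ) = ((R.natDegree - 2 : ℕ) : ℝ) / (ringChar Fq ^ j : ℕ) := by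
    have hf' : ((ringChar Fq ^ j : ℕ) : ℝ) ≠ 0 := Nat.cast_ne_zero.2 hf.ne'
    rw [Nat.cast_mul, Nat.cast_sub hdeg]
    field_simp
    norm_num
  rw [hexp]
  exact ⟨β, hβ, le_rpow_inv_mul_rpow_div_of_pow_le (hv.nonneg _) (hv.nonneg _)
    (Hpoly_nonneg _) hf.ne' hle⟩

theorem stmt16 (Fq : Type) [Field Fq] [Fintype Fq]
    (v : L Fq → ℝ) (hv : IsAbsExt Fq v)
    (P : Polynomial (Polynomial Fq)) (hirr : Irreducible P) (hdeg : 0 < P.natDegree)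
    (ξ : K Fq) (α : L Fq) (hα : evalL Fq P α = 0)
    (hmin : ∀ β : L Fq, evalL Fq P β = 0 → v (toL Fq ξ - α) ≤ v (toL Fq ξ - β))
    (hnf : 2 * insepDeg Fq P ≤ P.natDegree) :
    v (toL Fq ξ - α) ≤ kabs Fq (evalK Fq P ξ) ^ ((insepDeg Fq P : ℝ)⁻¹) *
      Hpoly Fq P ^ ((P.natDegree : ℝ) / (insepDeg Fq P : ℝ) ^ 2 - 2 / (insepDeg Fq P : ℝ)) := by
  obtain ⟨β, hβ, hle⟩ := stmt16_general hv hirr hnf (toL Fq ξ)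
  exact (hmin β hβ).trans (by rwa [← toL_evalK, hv.extends_kabs] at hle)

end Ooto
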